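/- Let X = EuclideanSpace ℝ (Fin n), let U be a nonempty set of impulse values in (Fin p → ℝ), let v : X → ℝ be bounded and uniformly continuous, let g : X → (Fin p → ℝ) → X be such that x ↦ g(x, ξ) is K-Lipschitz for every ξ ∈ U (with a constant K independent of ξ), and let c : X → (Fin p → ℝ) → ℝ be nonnegative and such that x ↦ c(x, ξ) is K'-Lipschitz for every ξ ∈ U (with K' independent of ξ). Then the function x ↦ sup_{ξ ∈ U} [ v(x + g(x, ξ)) − c(x, ξ) ] is uniformly continuous on X. -/

import Mathlib

open scoped BigOperators

/-!
The functions `x ↦ v (x + g x ξ) - c x ξ`, indexed by the impulses `ξ`, are uniformly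
equicontinuous. A modulus of continuity common to a whole family passes to its pointwise supremum,
because the supremum is a `1`-Lipschitz function of the family in the uniform distance.
-/

open Set

section UniformEquicontinuous

variable {ι α β γ : Type*} [UniformSpace α] [UniformSpace β] [UniformSpace γ]

theorem uniformEquicontinuous_const {f : α → β} (hf : UniformContinuous f) :
    UniformEquicontinuous fun _ : ι => f :=
  fun _ hV => Filter.mem_of_superset (hf hV) fun _ hxy _ => hxy

theorem uniformEquicontinuous_prodMk {F : ι → α → β} {G : ι → α → γ}
    (hF : UniformEquicontinuous F) (hG : UniformEquicontinuous G) :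
    UniformEquicontinuous fun i x => (F i x, G i x) := by
  rw [uniformEquicontinuous_iff_uniformContinuous] at hF hG ⊢
  exact UniformFun.uniformEquivProdArrow.symm.uniformContinuous.comp (hF.prodMk hG)

theorem uniformEquicontinuous_comp_left {f : β → γ} {F : ι → α → β}
    (hf : UniformContinuous f) (hF : UniformEquicontinuous F) :
    UniformEquicontinuous fun i x => f (F i x) :=
  fun _ hV => hF _ (hf hV)

theorem uniformEquicontinuous_add [AddGroup β] [IsUniformAddGroup β] {F G : ι → α → β}
    (hF : UniformEquicontinuous F) (hG : UniformEquicontinuous G) :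
    UniformEquicontinuous fun i x => F i x + G i x :=
  uniformEquicontinuous_comp_left uniformContinuous_add (uniformEquicontinuous_prodMk hF hG)

theorem uniformEquicontinuous_sub [AddGroup β] [IsUniformAddGroup β] {F G : ι → α → β}
    (hF : UniformEquicontinuous F) (hG : UniformEquicontinuous G) :
    UniformEquicontinuous fun i x => F i x - G i x :=
  uniformEquicontinuous_comp_left uniformContinuous_sub (uniformEquicontinuous_prodMk hF hG)

theorem uniformEquicontinuous_of_norm_sub_le {E E' : Type*} [SeminormedAddCommGroup E]
    [SeminormedAddCommGroup E'] {F : ι → E → E'} {K : ℝ}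
    (hF : ∀ i x y, ‖F i x - F i y‖ ≤ K * ‖x - y‖) : UniformEquicontinuous F :=
  LipschitzWith.uniformEquicontinuous F K.toNNReal fun i =>
    .of_dist_le' fun x y => by simpa only [dist_eq_norm] using hF i x y

end UniformEquicontinuous

section Supremum

variable {ι : Type*} [Nonempty ι]

theorem ciSup_le_ciSup_add {R : Type*} [ConditionallyCompleteLattice R] [Add R] [AddRightMono R]
    {f g : ι → R} {C : R} (hg : BddAbove (range g)) (h : ∀ i, f i ≤ g i + C) :
    ⨆ i, f i ≤ (⨆ i, g i) + C :=
  ciSup_le fun i => (h i).trans (add_le_add_left (le_ciSup hg i) C)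

theorem dist_ciSup_ciSup_le {f g : ι → ℝ} {C : ℝ} (hf : BddAbove (range f))
    (hg : BddAbove (range g)) (h : ∀ i, dist (f i) (g i) ≤ C) :
    dist (⨆ i, f i) (⨆ i, g i) ≤ C := by
  have hfg : ⨆ i, f i ≤ (⨆ i, g i) + C :=
    ciSup_le_ciSup_add hg fun i => by linarith [(abs_le.1 (h i)).2]
  have hgf : ⨆ i, g i ≤ (⨆ i, f i) + C :=
    ciSup_le_ciSup_add hf fun i => by linarith [(abs_le.1 (h i)).1]
  exact abs_sub_le_iff.2 ⟨by linarith, by linarith⟩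

theorem uniformContinuous_ciSup {α : Type*} [UniformSpace α] {F : ι → α → ℝ}
    (hF : UniformEquicontinuous F) (hbdd : ∀ x, BddAbove (range fun i => F i x)) :
    UniformContinuous fun x => ⨆ i, F i x := by
  refine Metric.uniformity_basis_dist_le.tendsto_right_iff.2 fun ε hε => ?_
  filter_upwards [Metric.uniformEquicontinuous_iff_right.1 hF ε hε] with xy hxy
  exact dist_ciSup_ciSup_le (hbdd xy.1) (hbdd xy.2) fun i => (hxy i).le

end Supremum

theorem sup_nonlocal_operator_uniformContinuous_general {ι X : Type*} [Nonempty ι] [AddGroup X]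
    [UniformSpace X] [IsUniformAddGroup X] {v : X → ℝ} {g : ι → X → X} {c : ι → X → ℝ}
    (hv : UniformContinuous v) (hg : UniformEquicontinuous g) (hc : UniformEquicontinuous c)
    (hbdd : ∀ x, BddAbove (range fun ξ => v (x + g ξ x) - c ξ x)) :
    UniformContinuous fun x => ⨆ ξ, (v (x + g ξ x) - c ξ x) := by
  have h_state : UniformEquicontinuous fun ξ x => x + g ξ x :=
    uniformEquicontinuous_add (uniformEquicontinuous_const uniformContinuous_id) hg
  have h_payoff : UniformEquicontinuous fun ξ x => v (x + g ξ x) - c ξ x :=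
    uniformEquicontinuous_sub (uniformEquicontinuous_comp_left hv h_state) hc
  exact uniformContinuous_ciSup h_payoff hbdd

/-- Supremum half of Proposition 2.5: the maximum non-local cost operator
`x ↦ sup_{ξ ∈ U} [v (x + g x ξ) - c x ξ]` applied to a bounded uniformly continuous
function `v` is uniformly continuous, provided `g` and `c` are Lipschitz in the state
uniformly in the impulse value and `c` is nonnegative. -/
theorem sup_nonlocal_operator_uniformContinuous
    (n p : ℕ) (U : Set (Fin p → ℝ)) (hU : U.Nonempty)
    (v : EuclideanSpace ℝ (Fin n) → ℝ)
    (M : ℝ) (hvb : ∀ x, |v x| ≤ M) (hvu : UniformContinuous v)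
    (g : EuclideanSpace ℝ (Fin n) → (Fin p → ℝ) → EuclideanSpace ℝ (Fin n))
    (K : ℝ) (hK : 0 ≤ K)
    (hg : ∀ ξ ∈ U, ∀ x₁ x₂ : EuclideanSpace ℝ (Fin n),
      ‖g x₁ ξ - g x₂ ξ‖ ≤ K * ‖x₁ - x₂‖)
    (c : EuclideanSpace ℝ (Fin n) → (Fin p → ℝ) → ℝ)
    (hc : ∀ x ξ, 0 ≤ c x ξ)
    (K' : ℝ) (hK' : 0 ≤ K')
    (hcL : ∀ ξ ∈ U, ∀ x₁ x₂ : EuclideanSpace ℝ (Fin n),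
      |c x₁ ξ - c x₂ ξ| ≤ K' * ‖x₁ - x₂‖) :
    UniformContinuous fun x : EuclideanSpace ℝ (Fin n) =>
      ⨆ ξ : U, (v (x + g x (ξ : Fin p → ℝ)) - c x (ξ : Fin p → ℝ)) := by
  have : Nonempty U := hU.to_subtype
  exact sup_nonlocal_operator_uniformContinuous_general hvu
    (uniformEquicontinuous_of_norm_sub_le fun ξ : U => hg ξ ξ.2)
    (uniformEquicontinuous_of_norm_sub_le fun ξ : U => hcL ξ ξ.2)
    fun x => ⟨M, forall_mem_range.2 fun ξ =>
      (sub_le_self _ (hc x ξ)).trans (le_of_abs_le (hvb (x + g x ξ)))⟩
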